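/- There exists a constant C > 0 such that for every δ ∈ (0, 1] and every Schwartz function v on ℝ² (in the variables (t, x)), one has ‖v‖_{L⁴(ℝ²)} ≤ C · ‖⟨τ − p̃_δ(ξ)⟩^{3/8} · v̂(τ, ξ)‖_{L²(ℝ²)}, where v̂ denotes the space-time Fourier transform of v. -/

import Mathlib

open Real MeasureTheory

/-- Japanese bracket `⟨x⟩ = (1 + x²)^{1/2}`. -/
noncomputable def jap (x : ℝ) : ℝ := Real.sqrt (1 + x ^ 2)

/-- The Fourier multiplier of the scaled ILW dispersion operator:
`L_δ(ξ) = 6ξ² ∑_{k=1}^∞ 1/(k²π² + δ²ξ²)`. -/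
noncomputable def Ldelta (δ ξ : ℝ) : ℝ :=
  6 * ξ ^ 2 * ∑' k : ℕ, 1 / (((k : ℝ) + 1) ^ 2 * Real.pi ^ 2 + δ ^ 2 * ξ ^ 2)

/-- The dispersion symbol `p̃_δ(ξ) = ξ·L_δ(ξ)` of the scaled ILW. -/
noncomputable def ptilde (δ ξ : ℝ) : ℝ := ξ * Ldelta δ ξ

/-- The space-time Fourier transform `v̂(τ, ξ) = ∫∫ e^{-i(tτ + xξ)} v(t,x) dt dx`. -/
noncomputable def spaceTimeFourier (v : ℝ × ℝ → ℂ) (τ ξ : ℝ) : ℂ :=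
  ∫ t : ℝ, ∫ x : ℝ, Complex.exp (-Complex.I * (t * τ + x * ξ)) * v (t, x)


/-!
The proof is the bilinear `L²` argument. By Plancherel, `‖v‖₄⁴ = ‖v²‖₂²` is, up to a constant,
`‖v̂ ∗ v̂‖₂²`, which only grows when `v̂` is replaced by `F = |v̂|` (`lintegral_pow_four_le_sqConv`).
From then on everything is about nonnegative functions, with values in `ℝ≥0∞`, and no integrability
has to be checked.

Since `p̃` is odd, all sign combinations of the two frequencies reduce to the interaction of
nonnegative ones (`sqConv_le_fold`): reflecting one factor does not change the `L²` norm of a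
convolution. If `F` and `G` live at distance at most `M` and `N` from the curve `τ = p̃(ξ)`,
Cauchy–Schwarz bounds `‖F ∗ G‖₂²` by `‖F‖₂² ‖G‖₂²` times the largest measure of the intersection of
one neighbourhood with a reflected translate of the other (`sqConv_le_of_support`). For output
`(τ, ξ)` this intersection has time-frequency width `≲ min(M, N)`, and its frequencies `x ∈ [0, ξ]`
satisfy `|τ - p̃(x) - p̃(ξ - x)| ≲ max(M, N)`. The closed form
`p̃(ξ) = 3ξ(δξ coth(δξ) - 1)/δ²` shows that `p̃` is convex on `(0, ∞)` with `p̃'' ≥ 6ξ/(2 + δξ)`,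
hence `p̃'' ≥ 1` for `ξ ≥ 1/2`, uniformly in `δ ≤ 1`. So `x ↦ p̃(x) + p̃(ξ - x)` grows quadratically
away from `x = ξ/2` when `ξ ≥ 1` (`resonance_growth`), and the admissible `x` form a set of measure
`≲ max(M, N)^(1/2)`; for `ξ ≤ 1` the interval `[0, ξ]` is short enough (`volume_resonance_le`).

Altogether `‖F ∗ G‖₂ ≲ min(M, N)^(1/2) max(M, N)^(1/4) ‖F‖₂ ‖G‖₂`. Compared with the weights
`M^(3/8) N^(3/8)` this gains `(min(M, N) / max(M, N))^(1/8)`, so that a dyadic decomposition in the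
modulation `⟨τ - p̃(ξ)⟩` sums up (`sqConv_self_le`).
-/

/-! ### The dispersion symbol -/

lemma cot_mul_I_eq (x : ℝ) (hx : x ≠ 0) :
    ((Real.pi : ℂ)) * Complex.cot (Real.pi * (x / Real.pi * Complex.I)) =
      -(Real.pi * (Real.cosh x / Real.sinh x)) * Complex.I := by
  have hpi : (Real.pi : ℂ) ≠ 0 := by exact_mod_cast Real.pi_ne_zero
  have h1 : (Real.pi : ℂ) * (x / Real.pi * Complex.I) = x * Complex.I := by
    field_simp
  have hs : (Real.sinh x : ℂ) ≠ 0 := by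
    exact_mod_cast (Real.sinh_ne_zero.mpr hx)
  rw [h1, Complex.cot, Complex.cos_mul_I, Complex.sin_mul_I, ← Complex.ofReal_cosh,
    ← Complex.ofReal_sinh]
  have hI := Complex.I_ne_zero
  field_simp
  rw [Complex.I_sq]; ring

/-- The Mittag-Leffler expansion of the hyperbolic cotangent. -/
lemma tsum_coth (x : ℝ) (hx : x ≠ 0) :
    ∑' k : ℕ, 1 / (((k : ℝ) + 1) ^ 2 * Real.pi ^ 2 + x ^ 2) =
      (x * (Real.cosh x / Real.sinh x) - 1) / (2 * x ^ 2) := by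
  have hpi : (Real.pi : ℂ) ≠ 0 := by exact_mod_cast Real.pi_ne_zero
  have hxc : (x : ℂ) ≠ 0 := by exact_mod_cast hx
  have hI := Complex.I_ne_zero
  set z : ℂ := x / Real.pi * Complex.I with hz
  have hzim : z.im = x / Real.pi := by
    rw [hz, ← Complex.ofReal_div]; simp
  have hmem : z ∈ Complex.integerComplement := by
    rintro ⟨n, hn⟩
    have := congrArg Complex.im hn
    rw [hzim] at this
    rw [Complex.intCast_im] at this
    exact div_ne_zero hx Real.pi_ne_zero this.symm
  -- At `z = i x / π` the `n`-th term of the cotangent series is `-2 i π x` times the wanted one.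
  have key := cot_series_rep' hmem
  rw [hz, cot_mul_I_eq x hx, ← hz] at key
  have hterm : ∀ n : ℕ, (1 / (z - (n + 1)) + 1 / (z + (n + 1)) : ℂ) =
      (-2 * x * Real.pi * Complex.I) *
        ((1 / (((n : ℝ) + 1) ^ 2 * Real.pi ^ 2 + x ^ 2) : ℝ) : ℂ) := by
    intro n
    have ha : z - (n + 1) ≠ 0 := by
      intro h
      have := congrArg Complex.im h
      simp [hzim, hx, Real.pi_ne_zero] at this
    have hb : z + (n + 1) ≠ 0 := by
      intro h
      have := congrArg Complex.im h
      simp [hzim, hx, Real.pi_ne_zero] at this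
    have hc : (((n : ℝ) + 1) ^ 2 * Real.pi ^ 2 + x ^ 2 : ℂ) ≠ 0 := by
      have : (0 : ℝ) < ((n : ℝ) + 1) ^ 2 * Real.pi ^ 2 + x ^ 2 := by positivity
      exact_mod_cast this.ne'
    have hab : (z - (n + 1)) * (z + (n + 1)) =
        -(((n : ℝ) + 1) ^ 2 * Real.pi ^ 2 + x ^ 2 : ℂ) / Real.pi ^ 2 := by
      rw [hz]
      field_simp
      ring_nf
      rw [Complex.I_sq]
      push_cast
      ring
    have e1 : (1 / (z - (n + 1)) + 1 / (z + (n + 1)) : ℂ) =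
        2 * z / ((z - (n + 1)) * (z + (n + 1))) := by
      field_simp
      ring
    rw [e1, hab, hz]
    push_cast at hc ⊢
    field_simp
  simp_rw [hterm] at key
  rw [tsum_mul_left, ← Complex.ofReal_tsum] at key
  set S : ℝ := ∑' k : ℕ, 1 / (((k : ℝ) + 1) ^ 2 * Real.pi ^ 2 + x ^ 2)
  have k2 := congrArg Complex.im key
  have h1z : (1 / z).im = -(Real.pi / x) := by
    have : 1 / z = ((-(Real.pi / x) : ℝ) : ℂ) * Complex.I := by
      rw [hz]
      push_cast
      field_simp
      rw [Complex.I_sq]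
      ring
    rw [this]; simp
  rw [Complex.sub_im, h1z] at k2
  have h2 : (-(Real.pi * (Real.cosh x / Real.sinh x)) * Complex.I : ℂ).im =
      -(Real.pi * (Real.cosh x / Real.sinh x)) := by
    rw [← Complex.ofReal_div, ← Complex.ofReal_mul, ← Complex.ofReal_neg, Complex.im_ofReal_mul,
      Complex.I_im, mul_one]
  have h3 : (-2 * x * Real.pi * Complex.I * (S : ℂ)).im = -2 * x * Real.pi * S := by
    have : (-2 * x * Real.pi * Complex.I * (S : ℂ)) =
      ((-2 * x * Real.pi * S : ℝ) : ℂ) * Complex.I := by push_cast; ring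
    rw [this]; simp
  rw [h2, h3] at k2
  have hpi' := Real.pi_ne_zero
  have h4 : Real.pi * (2 * x ^ 2 * S) = Real.pi * (x * (Real.cosh x / Real.sinh x) - 1) := by
    have h5 := congrArg (fun t => -x * t) k2
    have h6 : -x * (-(Real.pi * (Real.cosh x / Real.sinh x)) - -(Real.pi / x)) =
        Real.pi * (x * (Real.cosh x / Real.sinh x) - 1) := by
      have : x * (Real.pi / x) = Real.pi := by field_simp
      linear_combination -this
    rw [h6] at h5
    rw [h5]; ring
  have h7 := mul_left_cancel₀ hpi' h4
  rw [eq_div_iff (by positivity)]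
  linarith

/-- Closed form of the symbol; at `ξ = 0` both sides vanish thanks to `x / 0 = 0`. -/
lemma ptilde_eq {δ : ℝ} (hδ : 0 < δ) (ξ : ℝ) :
    ptilde δ ξ =
      3 * ξ * (δ * ξ * (Real.cosh (δ * ξ) / Real.sinh (δ * ξ)) - 1) / δ ^ 2 := by
  by_cases hξ : ξ = 0
  · simp [ptilde, hξ]
  have h := tsum_coth (δ * ξ) (mul_ne_zero hδ.ne' hξ)
  rw [ptilde, Ldelta]
  have : ∀ k : ℕ, 1 / (((k : ℝ) + 1) ^ 2 * Real.pi ^ 2 + δ ^ 2 * ξ ^ 2) =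
      1 / (((k : ℝ) + 1) ^ 2 * Real.pi ^ 2 + (δ * ξ) ^ 2) := by
    intro k; rw [mul_pow]
  simp_rw [this]
  rw [h]
  field_simp
  ring

lemma measurable_ptilde {δ : ℝ} (hδ : 0 < δ) : Measurable (ptilde δ) := by
  have : ptilde δ = fun ξ =>
      3 * ξ * (δ * ξ * (Real.cosh (δ * ξ) / Real.sinh (δ * ξ)) - 1) / δ ^ 2 :=
    funext (ptilde_eq hδ)
  rw [this]
  fun_prop

lemma ptilde_neg (δ ξ : ℝ) : ptilde δ (-ξ) = -ptilde δ ξ := by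
  simp [ptilde, Ldelta]

/-- The derivative of `ptilde δ` on `(0, ∞)`. -/
noncomputable def ptildeDeriv (δ ξ : ℝ) : ℝ :=
  3 / δ ^ 2 * (2 * (δ * ξ) * (Real.cosh (δ * ξ) / Real.sinh (δ * ξ))
    - (δ * ξ) ^ 2 / Real.sinh (δ * ξ) ^ 2 - 1)

lemma hasDerivAt_ptilde {δ : ℝ} (hδ : 0 < δ) {ξ : ℝ} (hξ : 0 < ξ) :
    HasDerivAt (ptilde δ) (ptildeDeriv δ ξ) ξ := by
  have hs : Real.sinh (δ * ξ) ≠ 0 := (Real.sinh_pos_iff.mpr (mul_pos hδ hξ)).ne'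
  have e : ptilde δ = fun ξ =>
      3 * ξ * (δ * ξ * (Real.cosh (δ * ξ) / Real.sinh (δ * ξ)) - 1) / δ ^ 2 :=
    funext (ptilde_eq hδ)
  rw [e]
  have hid : HasDerivAt (fun x : ℝ => δ * x) δ ξ := by
    simpa using (hasDerivAt_id ξ).const_mul δ
  have hc := hid.cosh
  have hsd := hid.sinh
  have h3 : HasDerivAt (fun x : ℝ => 3 * x) 3 ξ := by
    simpa using (hasDerivAt_id ξ).const_mul 3
  have h := ((h3.mul ((hid.mul (hc.div hsd hs)).sub_const 1)).div_const (δ ^ 2))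
  convert! h using 1
  rw [ptildeDeriv]
  have := Real.cosh_sq (δ * ξ)
  simp only [Pi.mul_apply, Pi.div_apply]
  field_simp
  rw [this]
  ring

/-- The second derivative of `ptilde δ` on `(0, ∞)`, bounded below through
`q''(z) ≥ 2 tanh (z / 2) ≥ 2 z / (2 + z)` for `q(z) = z² coth z - z`. -/
lemma hasDerivAt_ptildeDeriv {δ : ℝ} (hδ : 0 < δ) {ξ : ℝ} (hξ : 0 < ξ) :
    ∃ d, HasDerivAt (ptildeDeriv δ) d ξ ∧ 6 * ξ / (2 + δ * ξ) ≤ d := by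
  have hz : 0 < δ * ξ := mul_pos hδ hξ
  have hs0 : 0 < Real.sinh (δ * ξ) := Real.sinh_pos_iff.mpr hz
  have hs : Real.sinh (δ * ξ) ≠ 0 := hs0.ne'
  have hid : HasDerivAt (fun x : ℝ => δ * x) δ ξ := by
    simpa using (hasDerivAt_id ξ).const_mul δ
  have hc := hid.cosh
  have hsd := hid.sinh
  have h := (((((hid.const_mul 2).mul (hc.div hsd hs)).sub
    ((hid.pow 2).div (hsd.pow 2) (pow_ne_zero 2 hs))).sub_const 1).const_mul (3 / δ ^ 2))
  refine ⟨_, h, ?_⟩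
  simp only [Pi.div_apply, Pi.pow_apply]
  have hcs := Real.cosh_sq (δ * ξ)
  have hc1 : 1 ≤ Real.cosh (δ * ξ) := Real.one_le_cosh _
  have hsz : δ * ξ ≤ Real.sinh (δ * ξ) := Real.self_le_sinh_iff.mpr hz.le
  have htanh : δ * ξ * Real.sinh (δ * ξ) ≤ (Real.cosh (δ * ξ) - 1) * (2 + δ * ξ) := by
    rw [Real.sinh_eq, Real.cosh_eq]
    have he : δ * ξ + 1 ≤ Real.exp (δ * ξ) := Real.add_one_le_exp _
    have hep := Real.exp_pos (δ * ξ)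
    rw [Real.exp_neg]
    set z := δ * ξ
    set t := Real.exp z
    have h1 : z * (t - t⁻¹) / 2 * (2 * t) ≤ ((t + t⁻¹) / 2 - 1) * (2 + z) * (2 * t) := by
      have : t⁻¹ * t = 1 := inv_mul_cancel₀ hep.ne'
      have l : z * (t - t⁻¹) / 2 * (2 * t) = z * (t ^ 2 - 1) := by
        linear_combination -z * this
      have r : ((t + t⁻¹) / 2 - 1) * (2 + z) * (2 * t) = (t - 1) ^ 2 * (2 + z) := by
        linear_combination (2 + z) * this
      rw [l, r]
      nlinarith [mul_nonneg (sub_nonneg.2 (by linarith : (1 : ℝ) ≤ t)) (sub_nonneg.2 he)]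
    have := le_of_mul_le_mul_right h1 (by positivity)
    linarith
  have hδξ : ξ = δ * ξ / δ := by field_simp
  generalize Real.cosh (δ * ξ) = c at *
  generalize Real.sinh (δ * ξ) = s at *
  have e1 : 3 / δ ^ 2 * (2 * δ * (c / s) +
      2 * (δ * ξ) * ((s * δ * s - c * (c * δ)) / s ^ 2) -
      (2 * (δ * ξ) * δ * s ^ 2 - (δ * ξ) ^ 2 * (2 * s * (c * δ))) / (s ^ 2) ^ 2) =
      6 / δ * ((c * s ^ 2 + c * (δ * ξ) ^ 2 - 2 * (δ * ξ) * s) / s ^ 3) := by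
    field_simp
    rw [hcs]; ring
  have hδ6 : 0 ≤ 6 / δ := by positivity
  calc 6 * ξ / (2 + δ * ξ) = 6 / δ * ((δ * ξ) / (2 + δ * ξ)) := by field_simp
    _ ≤ 6 / δ * ((c - 1) / s) := by
        refine mul_le_mul_of_nonneg_left ?_ hδ6
        rw [div_le_div_iff₀ (by positivity) hs0]
        exact htanh
    _ ≤ 6 / δ * ((c * s ^ 2 + c * (δ * ξ) ^ 2 - 2 * (δ * ξ) * s) / s ^ 3) := by
        refine mul_le_mul_of_nonneg_left ?_ hδ6
        rw [div_le_div_iff₀ hs0 (by positivity)]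
        have : (c - 1) * s ^ 2 ≤ c * s ^ 2 + c * (δ * ξ) ^ 2 - 2 * (δ * ξ) * s := by
          nlinarith [sq_nonneg (s - δ * ξ), mul_nonneg (sub_nonneg.2 hc1) (sq_nonneg (δ * ξ))]
        nlinarith [mul_le_mul_of_nonneg_right this hs0.le]
    _ = _ := by rw [← e1]; norm_num

lemma ptildeDeriv_monotoneOn {δ : ℝ} (hδ : 0 < δ) :
    MonotoneOn (ptildeDeriv δ) (Set.Ioi 0) := by
  refine monotoneOn_of_deriv_nonneg (convex_Ioi 0) ?_ ?_ ?_
  · intro x hx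
    obtain ⟨d, hd, -⟩ := hasDerivAt_ptildeDeriv hδ hx
    exact hd.continuousAt.continuousWithinAt
  · intro x hx
    rw [interior_Ioi] at hx
    obtain ⟨d, hd, -⟩ := hasDerivAt_ptildeDeriv hδ hx
    exact hd.differentiableAt.differentiableWithinAt
  · intro x hx
    rw [interior_Ioi] at hx
    obtain ⟨d, hd, h⟩ := hasDerivAt_ptildeDeriv hδ hx
    rw [hd.deriv]
    have : (0 : ℝ) < x := hx
    exact le_trans (by positivity) h

/-- Uniformly in `δ ≤ 1`, the symbol has second derivative at least `1` on `[1/2, ∞)`. -/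
lemma ptildeDeriv_sub_monotoneOn {δ : ℝ} (hδ : δ ∈ Set.Ioc (0 : ℝ) 1) :
    MonotoneOn (fun x => ptildeDeriv δ x - x) (Set.Ici (1 / 2)) := by
  have h0 : ∀ x : ℝ, 1 / 2 ≤ x → 0 < x := fun x hx => by linarith
  refine monotoneOn_of_deriv_nonneg (convex_Ici _) ?_ ?_ ?_
  · intro x hx
    obtain ⟨d, hd, -⟩ := hasDerivAt_ptildeDeriv hδ.1 (h0 x hx)
    exact (hd.sub (hasDerivAt_id x)).continuousAt.continuousWithinAt
  · intro x hx
    rw [interior_Ici] at hx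
    obtain ⟨d, hd, -⟩ := hasDerivAt_ptildeDeriv hδ.1 (h0 x hx.le)
    exact (hd.sub (hasDerivAt_id x)).differentiableAt.differentiableWithinAt
  · intro x hx
    rw [interior_Ici] at hx
    have hx' : (1 : ℝ) / 2 < x := hx
    obtain ⟨d, hd, h⟩ := hasDerivAt_ptildeDeriv hδ.1 (h0 x hx.le)
    rw [HasDerivAt.deriv (f := fun x => ptildeDeriv δ x - x) (hd.sub (hasDerivAt_id' x))]
    have hδx : δ * x ≤ x := by nlinarith [hδ.2]
    have hpos : 0 < δ * x := mul_pos hδ.1 (by linarith)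
    have : 1 ≤ 6 * x / (2 + δ * x) := by
      rw [le_div_iff₀ (by linarith)]
      linarith
    linarith

/-- Quadratic growth of `x ↦ p̃(x) + p̃(ξ - x)` to the right of its minimum `ξ / 2`. -/
lemma resonance_growth {δ : ℝ} (hδ : δ ∈ Set.Ioc (0 : ℝ) 1) {ξ : ℝ} (hξ : 1 ≤ ξ)
    {x y : ℝ} (hx : ξ / 2 ≤ x) (hxy : x ≤ y) (hy : y < ξ) :
    (y - x) ^ 2 / 2 ≤ (ptilde δ y + ptilde δ (ξ - y)) - (ptilde δ x + ptilde δ (ξ - x)) := by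
  have hder : ∀ t ∈ Set.Ico (ξ / 2) ξ,
      HasDerivAt (fun t => ptilde δ t + ptilde δ (ξ - t) - (t - ξ / 2) ^ 2 / 2)
        (ptildeDeriv δ t - ptildeDeriv δ (ξ - t) - (t - ξ / 2)) t := by
    intro t ht
    have h1 := hasDerivAt_ptilde hδ.1 (show 0 < t by linarith [ht.1])
    have h2 := hasDerivAt_ptilde hδ.1 (show 0 < ξ - t by linarith [ht.2])
    have h3 := h2.comp t ((hasDerivAt_id t).const_sub ξ)
    have h4 := ((((hasDerivAt_id t).sub_const (ξ / 2)).pow 2).div_const 2)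
    have h5 := (h1.add h3).sub h4
    convert! h5 using 1
    simp
    ring
  have hmono : MonotoneOn (fun t => ptilde δ t + ptilde δ (ξ - t) - (t - ξ / 2) ^ 2 / 2)
      (Set.Ico (ξ / 2) ξ) := by
    refine monotoneOn_of_deriv_nonneg (convex_Ico _ _) ?_ ?_ ?_
    · intro t ht
      exact (hder t ht).continuousAt.continuousWithinAt
    · intro t ht
      exact (hder t (interior_subset ht)).differentiableAt.differentiableWithinAt
    · intro t ht
      have ht := interior_subset ht
      rw [(hder t ht).deriv]
      -- To the right of `ξ / 2` the second derivative is at least `1`; to the left, at `ξ - t`,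
      -- only the convexity of the symbol is used.
      have a1 := ptildeDeriv_sub_monotoneOn hδ (a := ξ / 2) (b := t)
        (by simp; linarith) (by simp; linarith [ht.1]) ht.1
      have a2 := ptildeDeriv_monotoneOn hδ.1 (a := ξ - t) (b := ξ / 2)
        (by simp; linarith [ht.2]) (by simp; linarith) (by linarith [ht.1])
      simp only at a1
      linarith
  have := hmono ⟨hx, by linarith⟩ ⟨by linarith, hy⟩ hxy
  simp only at this
  nlinarith [mul_nonneg (sub_nonneg.2 hxy) (sub_nonneg.2 hx)]

/-! ### Measure of the resonance sets -/

lemma volume_le_of_pairwise (s : Set ℝ) (D : ℝ)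
    (h : ∀ x ∈ s, ∀ y ∈ s, x ≤ y → y - x ≤ D) : volume s ≤ ENNReal.ofReal D := by
  refine (Real.volume_le_diam s).trans (Metric.ediam_le ?_)
  intro x hx y hy
  rw [edist_dist, Real.dist_eq]
  refine ENNReal.ofReal_le_ofReal ?_
  rcases le_total x y with hxy | hxy
  · rw [abs_sub_comm, abs_of_nonneg (sub_nonneg.2 hxy)]; exact h x hx y hy hxy
  · rw [abs_of_nonneg (sub_nonneg.2 hxy)]; exact h y hy x hx hxy

/-- A level strip of height `L ≥ 1` of `x ↦ p̃(x) + p̃(ξ - x)` meets `[0, ξ]` in a set of measure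
`O(L ^ (1 / 2))`. For `ξ ≥ 1` this is the quadratic growth on either side of `ξ / 2`, for `ξ ≤ 1`
the interval itself is short enough. -/
lemma volume_resonance_le {δ : ℝ} (hδ : δ ∈ Set.Ioc (0 : ℝ) 1) (τ ξ : ℝ) {L : ℝ} (hL : 1 ≤ L) :
    volume {x : ℝ | 0 ≤ x ∧ x ≤ ξ ∧ |τ - (ptilde δ x + ptilde δ (ξ - x))| ≤ L} ≤
      ENNReal.ofReal (4 * √L) := by
  have hsq : 1 ≤ √L := Real.one_le_sqrt.mpr hL
  have hL2 : √L ^ 2 = L := Real.sq_sqrt (by linarith)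
  set A := {x : ℝ | 0 ≤ x ∧ x ≤ ξ ∧ |τ - (ptilde δ x + ptilde δ (ξ - x))| ≤ L} with hA
  rcases le_total ξ 1 with hξ | hξ
  · refine volume_le_of_pairwise _ _ ?_
    rintro x ⟨hx0, hx1, -⟩ y ⟨hy0, hy1, -⟩ -
    linarith
  · have key : ∀ x y : ℝ, ξ / 2 ≤ x → x ≤ y → y < ξ →
        |τ - (ptilde δ x + ptilde δ (ξ - x))| ≤ L → |τ - (ptilde δ y + ptilde δ (ξ - y))| ≤ L →
        y - x ≤ 2 * √L := by
      intro x y h1 h2 h3 hx hy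
      have := resonance_growth hδ hξ h1 h2 h3
      rw [abs_le] at hx hy
      refine le_of_sq_le_sq ?_ (by positivity)
      nlinarith
    -- The reflection `x ↦ ξ - x` preserves `A` and carries the left half to the right half.
    have hsub : A ⊆ (A ∩ Set.Ico (ξ / 2) ξ) ∪ ((A ∩ Set.Ioc 0 (ξ / 2)) ∪ {0, ξ}) := by
      intro x hx
      have h1 := hx.1
      have h2 := hx.2.1
      simp only [Set.mem_union, Set.mem_inter_iff, hx, true_and, Set.mem_Ico, Set.mem_Ioc,
        Set.mem_insert_iff, Set.mem_singleton_iff]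
      grind
    have hz : volume ({0, ξ} : Set ℝ) = 0 := by
      exact (Set.toFinite _).measure_zero _
    calc volume A ≤ volume (A ∩ Set.Ico (ξ / 2) ξ) +
          (volume (A ∩ Set.Ioc 0 (ξ / 2)) + volume ({0, ξ} : Set ℝ)) :=
          (measure_mono hsub).trans ((measure_union_le _ _).trans
            (add_le_add_right (measure_union_le _ _) _))
      _ ≤ ENNReal.ofReal (2 * √L) + (ENNReal.ofReal (2 * √L) + 0) := by
          rw [hz]
          gcongr
          · refine volume_le_of_pairwise _ _ ?_
            rintro x ⟨hx, hx'⟩ y ⟨hy, hy'⟩ hxy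
            exact key x y hx'.1 hxy hy'.2 hx.2.2 hy.2.2
          · refine volume_le_of_pairwise _ _ ?_
            rintro x ⟨hx, hx'⟩ y ⟨hy, hy'⟩ hxy
            have := key (ξ - y) (ξ - x) (by linarith [hy'.2]) (by linarith) (by linarith [hx'.1])
              (by rw [sub_sub_cancel, add_comm]; exact hy.2.2)
              (by rw [sub_sub_cancel, add_comm]; exact hx.2.2)
            linarith
      _ = ENNReal.ofReal (4 * √L) := by
          rw [add_zero, ← ENNReal.ofReal_add (by positivity) (by positivity)]
          congr 1; ring

/-- Points with nonnegative frequency at distance at most `M` from the curve `τ = p̃(ξ)`. -/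
def nearCurve (δ M : ℝ) : Set (ℝ × ℝ) := {a | 0 ≤ a.2 ∧ |a.1 - ptilde δ a.2| ≤ M}

lemma measurableSet_nearCurve {δ : ℝ} (hδ : 0 < δ) (M : ℝ) :
    MeasurableSet (nearCurve δ M) := by
  have := measurable_ptilde hδ
  have h1 : MeasurableSet {a : ℝ × ℝ | 0 ≤ a.2} := measurableSet_le (by fun_prop) (by fun_prop)
  have h2 : MeasurableSet {a : ℝ × ℝ | |a.1 - ptilde δ a.2| ≤ M} :=
    measurableSet_le (by fun_prop) (by fun_prop)
  exact h1.inter h2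

/-- Two neighbourhoods of the curve, one of them reflected in `ζ / 2`, have a small intersection:
for fixed frequency the time frequency ranges over an interval of length `2 M`, and the admissible
frequencies lie in a resonance set. -/
lemma volume_nearCurve_inter_le {δ : ℝ} (hδ : δ ∈ Set.Ioc (0 : ℝ) 1) {M N : ℝ} (hM : 1 ≤ M)
    (hN : 1 ≤ N) (ζ : ℝ × ℝ) :
    volume {a : ℝ × ℝ | a ∈ nearCurve δ M ∧ ζ - a ∈ nearCurve δ N} ≤
      ENNReal.ofReal (8 * M * √(M + N)) := by
  set A := {x : ℝ | 0 ≤ x ∧ x ≤ ζ.2 ∧ |ζ.1 - (ptilde δ x + ptilde δ (ζ.2 - x))| ≤ M + N} with hA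
  have hp := measurable_ptilde hδ.1
  have hAm : MeasurableSet A := by
    have h1 : MeasurableSet {x : ℝ | |ζ.1 - (ptilde δ x + ptilde δ (ζ.2 - x))| ≤ M + N} :=
      measurableSet_le (by fun_prop) (by fun_prop)
    exact measurableSet_Ici.inter (measurableSet_Iic.inter h1)
  have hm : MeasurableSet {a : ℝ × ℝ | a ∈ nearCurve δ M ∧ ζ - a ∈ nearCurve δ N} :=
    (measurableSet_nearCurve hδ.1 M).inter
      ((measurable_const.sub measurable_id) (measurableSet_nearCurve hδ.1 N))
  rw [Measure.volume_eq_prod, Measure.prod_apply_symm hm]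
  calc ∫⁻ x, volume ((fun t => (t, x)) ⁻¹' {a : ℝ × ℝ | a ∈ nearCurve δ M ∧ ζ - a ∈ nearCurve δ N})
      ≤ ∫⁻ x, A.indicator (fun _ => ENNReal.ofReal (2 * M)) x := by
        refine lintegral_mono fun x => ?_
        by_cases hx : x ∈ A
        · rw [Set.indicator_of_mem hx]
          refine volume_le_of_pairwise _ _ ?_
          rintro s ⟨⟨-, hs⟩, -⟩ t ⟨⟨-, ht⟩, -⟩ -
          simp only [abs_le] at hs ht
          linarith
        · rw [Set.indicator_of_notMem hx, nonpos_iff_eq_zero]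
          convert measure_empty (μ := (volume : Measure ℝ))
          ext t
          simp only [Set.mem_preimage, Set.mem_ofPred_eq, Set.mem_empty_iff_false, iff_false]
          rintro ⟨⟨h1, h2⟩, h3, h4⟩
          refine hx ⟨h1, by simpa using h3, ?_⟩
          simp only [Prod.fst_sub, Prod.snd_sub] at h2 h4
          rw [abs_le] at *
          constructor <;> linarith
    _ = ENNReal.ofReal (2 * M) * volume A := by
        rw [lintegral_indicator hAm, setLIntegral_const]
    _ ≤ ENNReal.ofReal (2 * M) * ENNReal.ofReal (4 * √(M + N)) := by
        gcongr
        exact volume_resonance_le hδ ζ.1 ζ.2 (by linarith)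
    _ = _ := by
        rw [← ENNReal.ofReal_mul (by positivity)]
        congr 1; ring

/-! ### Convolution squares of nonnegative functions -/

/-- `‖F ∗ G‖²_{L²}` for nonnegative functions on the plane. -/
noncomputable def sqConv (F G : ℝ × ℝ → ENNReal) : ENNReal :=
  ∫⁻ z, (∫⁻ a, F a * G (z - a)) ^ 2

lemma sqConv_comm (F G : ℝ × ℝ → ENNReal) : sqConv F G = sqConv G F := by
  refine lintegral_congr fun z => ?_
  congr 1
  rw [← lintegral_sub_left_eq_self _ z]
  refine lintegral_congr fun a => ?_
  rw [sub_sub_cancel, mul_comm]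

lemma sqConv_mono {F F' G G' : ℝ × ℝ → ENNReal} (h : F ≤ F') (h' : G ≤ G') :
    sqConv F G ≤ sqConv F' G' :=
  lintegral_mono fun z => pow_le_pow_left₀ (zero_le)
    (lintegral_mono fun a => mul_le_mul' (h a) (h' (z - a))) 2

lemma sqConv_expand {F G : ℝ × ℝ → ENNReal} (hF : Measurable F) (hG : Measurable G) :
    sqConv F G = ∫⁻ a, ∫⁻ c, F a * F c * ∫⁻ z, G (z - a) * G (z - c) := by
  calc sqConv F G = ∫⁻ z, ∫⁻ a, ∫⁻ c, F a * F c * (G (z - a) * G (z - c)) := by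
        refine lintegral_congr fun z => ?_
        rw [pow_two, ← lintegral_mul_const _ (by fun_prop)]
        refine lintegral_congr fun a => ?_
        rw [← lintegral_const_mul _ (by fun_prop)]
        refine lintegral_congr fun c => ?_
        ring
    _ = ∫⁻ a, ∫⁻ z, ∫⁻ c, F a * F c * (G (z - a) * G (z - c)) :=
        lintegral_lintegral_swap (by
          refine Measurable.aemeasurable ?_
          refine Measurable.lintegral_prod_right' (f := fun q : ((ℝ × ℝ) × (ℝ × ℝ)) × (ℝ × ℝ) =>
            F q.1.2 * F q.2 * (G (q.1.1 - q.1.2) * G (q.1.1 - q.2))) ?_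
          fun_prop)
    _ = ∫⁻ a, ∫⁻ c, ∫⁻ z, F a * F c * (G (z - a) * G (z - c)) := by
        refine lintegral_congr fun a => ?_
        exact lintegral_lintegral_swap (Measurable.aemeasurable (by fun_prop))
    _ = _ := by
        refine lintegral_congr fun a => lintegral_congr fun c => ?_
        rw [lintegral_const_mul _ (by fun_prop)]

/-- Reflecting one factor does not change the norm: on the physical side this is
`‖f g‖_{L²} = ‖f \bar g‖_{L²}`. -/
lemma sqConv_reflect {F G : ℝ × ℝ → ENNReal} (hF : Measurable F) (hG : Measurable G) :
    sqConv F (fun x => G (-x)) = sqConv F G := by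
  rw [sqConv_expand hF hG, sqConv_expand hF (by fun_prop)]
  refine lintegral_congr fun a => lintegral_congr fun c => ?_
  congr 1
  rw [← lintegral_sub_left_eq_self _ (a + c)]
  refine lintegral_congr fun z => ?_
  rw [mul_comm]
  congr 2 <;> abel

/-- The nonnegative-frequency function `1_{ξ ≥ 0} (F(ζ) + F(-ζ))`. -/
noncomputable def foldFreq (F : ℝ × ℝ → ENNReal) : ℝ × ℝ → ENNReal :=
  Set.indicator {a | 0 ≤ a.2} (fun a => F a + F (-a))

lemma measurable_foldFreq {F : ℝ × ℝ → ENNReal} (hF : Measurable F) : Measurable (foldFreq F) :=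
  Measurable.indicator (by fun_prop) (measurableSet_le measurable_const measurable_snd)

lemma le_fold_add (F : ℝ × ℝ → ENNReal) : F ≤ fun a => foldFreq F a + foldFreq F (-a) := by
  intro a
  simp only [foldFreq, Set.indicator, Set.mem_ofPred_eq, Prod.snd_neg, neg_neg, Left.nonneg_neg_iff]
  rcases le_total 0 a.2 with h | h
  · rw [if_pos h]
    exact le_self_add.trans le_self_add
  · rw [if_pos h, add_comm (F (-a))]
    exact le_self_add.trans (le_add_self)

lemma four_sq_le (a b c d : ENNReal) :
    (a + b + c + d) ^ 2 ≤ 4 * (a ^ 2 + b ^ 2 + c ^ 2 + d ^ 2) := by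
  by_cases ha : a = ⊤
  · simp [ha]
  by_cases hb : b = ⊤
  · simp [hb]
  by_cases hc : c = ⊤
  · simp [hc]
  by_cases hd : d = ⊤
  · simp [hd]
  lift a to NNReal using ha
  lift b to NNReal using hb
  lift c to NNReal using hc
  lift d to NNReal using hd
  norm_cast
  rw [← NNReal.coe_le_coe]
  push_cast
  nlinarith [sq_nonneg ((a : ℝ) - b), sq_nonneg ((a : ℝ) - c), sq_nonneg ((a : ℝ) - d),
    sq_nonneg ((b : ℝ) - c), sq_nonneg ((b : ℝ) - d), sq_nonneg ((c : ℝ) - d)]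

/-- Interactions of all sign combinations are dominated by the one of nonnegative frequencies. -/
lemma sqConv_le_fold {F : ℝ × ℝ → ENNReal} (hF : Measurable F) :
    sqConv F F ≤ 16 * sqConv (foldFreq F) (foldFreq F) := by
  have hG := measurable_foldFreq hF
  set G := foldFreq F with hGdef
  have hR : Measurable (fun a => G (-a)) := by fun_prop
  have e1 : sqConv G (fun a => G (-a)) = sqConv G G := sqConv_reflect hG hG
  have e2 : sqConv (fun a => G (-a)) G = sqConv G G := by rw [sqConv_comm, e1]
  have e3 : sqConv (fun a => G (-a)) (fun a => G (-a)) = sqConv G G := by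
    rw [sqConv_reflect hR hG, e2]
  calc sqConv F F ≤ sqConv (fun a => G a + G (-a)) (fun a => G a + G (-a)) :=
        sqConv_mono (le_fold_add F) (le_fold_add F)
    _ ≤ ∫⁻ z, 4 * ((∫⁻ a, G a * G (z - a)) ^ 2 + (∫⁻ a, G a * G (-(z - a))) ^ 2
          + (∫⁻ a, G (-a) * G (z - a)) ^ 2 + (∫⁻ a, G (-a) * G (-(z - a))) ^ 2) := by
        refine lintegral_mono fun z => ?_
        refine le_trans (le_of_eq ?_) (four_sq_le _ _ _ _)
        congr 1
        rw [← lintegral_add_left (by fun_prop), ← lintegral_add_left (by fun_prop),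
          ← lintegral_add_left (by fun_prop)]
        refine lintegral_congr fun a => ?_
        ring
    _ = 4 * (sqConv G G + sqConv G (fun a => G (-a)) + sqConv (fun a => G (-a)) G
          + sqConv (fun a => G (-a)) (fun a => G (-a))) := by
        rw [lintegral_const_mul _ (by fun_prop), lintegral_add_left (by fun_prop),
          lintegral_add_left (by fun_prop), lintegral_add_left (by fun_prop)]
        rfl
    _ = 16 * sqConv G G := by rw [e1, e2, e3]; ring

/-- Cauchy–Schwarz for convolutions: the `L²` norm of `F ∗ G` is controlled by the largest measure
of the intersection of the support of `F` with a reflected translate of the support of `G`. -/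
lemma sqConv_le_of_support {F G : ℝ × ℝ → ENNReal} (hF : Measurable F) (hG : Measurable G)
    {S T : Set (ℝ × ℝ)} (hS : MeasurableSet S) (hT : MeasurableSet T)
    (hFS : ∀ a ∉ S, F a = 0) (hGT : ∀ a ∉ T, G a = 0) {K : ENNReal}
    (hK : ∀ z : ℝ × ℝ, volume {a : ℝ × ℝ | a ∈ S ∧ z - a ∈ T} ≤ K) :
    sqConv F G ≤ K * ((∫⁻ a, F a ^ 2) * ∫⁻ a, G a ^ 2) := by
  have hpt : ∀ z, (∫⁻ a, F a * G (z - a)) ^ 2 ≤ K * ∫⁻ a, F a ^ 2 * G (z - a) ^ 2 := by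
    intro z
    set B := {a : ℝ × ℝ | a ∈ S ∧ z - a ∈ T} with hB
    have hBm : MeasurableSet B := hS.inter ((measurable_const.sub measurable_id) hT)
    have h1 : ∫⁻ a, F a * G (z - a) =
        ∫⁻ a, ((fun a => F a * G (z - a)) * B.indicator (fun _ => (1 : ENNReal)) : ℝ × ℝ → ENNReal) a := by
      refine lintegral_congr fun a => ?_
      rw [Pi.mul_apply]
      by_cases ha : a ∈ B
      · rw [Set.indicator_of_mem ha, mul_one]
      · rw [Set.indicator_of_notMem ha, mul_zero]
        by_cases h : a ∈ S
        · rw [hGT (z - a) (fun h' => ha ⟨h, h'⟩), mul_zero]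
        · rw [hFS a h, zero_mul]
    have h2 := ENNReal.lintegral_mul_le_Lp_mul_Lq volume Real.HolderConjugate.two_two
      (f := fun a => F a * G (z - a)) (g := B.indicator (fun _ => 1)) (by fun_prop)
      ((measurable_const.indicator hBm).aemeasurable)
    rw [← h1] at h2
    calc (∫⁻ a, F a * G (z - a)) ^ 2
        ≤ ((∫⁻ a, (F a * G (z - a)) ^ (2 : ℝ)) ^ (1 / (2 : ℝ)) *
          (∫⁻ a, (B.indicator (fun _ => 1) a) ^ (2 : ℝ)) ^ (1 / (2 : ℝ))) ^ 2 := by gcongr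
      _ = (∫⁻ a, F a ^ 2 * G (z - a) ^ 2) * volume B := by
          rw [mul_pow, ← ENNReal.rpow_natCast, ← ENNReal.rpow_natCast, ← ENNReal.rpow_mul,
            ← ENNReal.rpow_mul]
          norm_num
          simp_rw [mul_pow]
          congr 1
          rw [← lintegral_indicator_one hBm]
          refine lintegral_congr fun a => ?_
          by_cases ha : a ∈ B <;> simp [ha]
      _ ≤ _ := by rw [mul_comm]; gcongr; exact hK z
  calc sqConv F G ≤ ∫⁻ z, K * ∫⁻ a, F a ^ 2 * G (z - a) ^ 2 := lintegral_mono hpt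
    _ = K * ∫⁻ z, ∫⁻ a, F a ^ 2 * G (z - a) ^ 2 := lintegral_const_mul _ (by fun_prop)
    _ = K * ∫⁻ a, ∫⁻ z, F a ^ 2 * G (z - a) ^ 2 := by
        rw [lintegral_lintegral_swap (Measurable.aemeasurable (by fun_prop))]
    _ = K * ((∫⁻ a, F a ^ 2) * ∫⁻ a, G a ^ 2) := by
        congr 1
        rw [← lintegral_mul_const _ (by fun_prop)]
        refine lintegral_congr fun a => ?_
        rw [lintegral_const_mul _ (by fun_prop),
          lintegral_sub_right_eq_self (fun z => G z ^ 2) a]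

/-- Countable triangle inequality in `L²` for nonnegative functions. -/
lemma lintegral_sq_tsum_le {ι : Type*} [Countable ι] {u : ι → ℝ × ℝ → ENNReal}
    (hu : ∀ i, Measurable (u i)) {c : ι → ENNReal} (hc : ∀ i, ∫⁻ z, u i z ^ 2 ≤ c i ^ 2) :
    ∫⁻ z, (∑' i, u i z) ^ 2 ≤ (∑' i, c i) ^ 2 := by
  have hpair : ∀ i j, ∫⁻ z, u i z * u j z ≤ c i * c j := by
    intro i j
    have h2 := ENNReal.lintegral_mul_le_Lp_mul_Lq volume Real.HolderConjugate.two_two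
      (f := u i) (g := u j) (hu i).aemeasurable (hu j).aemeasurable
    have h3 : ∀ k, (∫⁻ z, u k z ^ (2 : ℝ)) ^ (1 / (2 : ℝ)) ≤ c k := by
      intro k
      have := ENNReal.rpow_le_rpow (hc k) (by norm_num : (0 : ℝ) ≤ 1 / 2)
      rw [← ENNReal.rpow_natCast (c k), ← ENNReal.rpow_mul] at this
      norm_num at this ⊢
      exact this
    exact h2.trans (mul_le_mul' (h3 i) (h3 j))
  calc ∫⁻ z, (∑' i, u i z) ^ 2 = ∫⁻ z, ∑' i, ∑' j, u i z * u j z := by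
        refine lintegral_congr fun z => ?_
        rw [pow_two, ← ENNReal.tsum_mul_right]
        exact tsum_congr fun i => ENNReal.tsum_mul_left.symm
    _ = ∑' i, ∑' j, ∫⁻ z, u i z * u j z := by
        rw [lintegral_tsum (f := fun i z => ∑' j, u i z * u j z) (fun i =>
          (Measurable.tsum fun j => (hu i).mul (hu j)).aemeasurable)]
        exact tsum_congr fun i => lintegral_tsum fun j => ((hu i).mul (hu j)).aemeasurable
    _ ≤ ∑' i, ∑' j, c i * c j := ENNReal.tsum_le_tsum fun i => ENNReal.tsum_le_tsum fun j =>
          hpair i j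
    _ = (∑' i, c i) ^ 2 := by
        rw [pow_two, ← ENNReal.tsum_mul_right]
        exact tsum_congr fun i => ENNReal.tsum_mul_left

/-! ### Dyadic decomposition in the modulation -/

lemma one_le_jap (x : ℝ) : 1 ≤ jap x := Real.one_le_sqrt.mpr (by nlinarith [sq_nonneg x])

lemma abs_le_jap (x : ℝ) : |x| ≤ jap x := Real.abs_le_sqrt (by linarith)

lemma measurable_jap : Measurable jap := by unfold jap; fun_prop

/-- The scale `n` with `256 ^ n ≤ ⟨τ - p̃(ξ)⟩ < 256 ^ (n + 1)`. The base `256` makes all powers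
occurring below integral. -/
noncomputable def level (δ : ℝ) (a : ℝ × ℝ) : ℕ := ⌊Real.logb 256 (jap (a.1 - ptilde δ a.2))⌋₊

lemma measurable_level {δ : ℝ} (hδ : 0 < δ) : Measurable (level δ) := by
  have := measurable_ptilde hδ
  have hj := measurable_jap
  refine Nat.measurable_floor.comp ?_
  unfold Real.logb
  fun_prop

lemma pow_level_le (δ : ℝ) (a : ℝ × ℝ) :
    (256 : ℝ) ^ level δ a ≤ jap (a.1 - ptilde δ a.2) := by
  have h1 := one_le_jap (a.1 - ptilde δ a.2)
  rw [← Real.rpow_natCast, ← Real.le_logb_iff_rpow_le (by norm_num) (by linarith)]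
  exact Nat.floor_le (Real.logb_nonneg (by norm_num) h1)

lemma jap_le_pow_level (δ : ℝ) (a : ℝ × ℝ) :
    jap (a.1 - ptilde δ a.2) ≤ (256 : ℝ) ^ (level δ a + 1) := by
  have h1 := one_le_jap (a.1 - ptilde δ a.2)
  rw [← Real.rpow_natCast, ← Real.logb_le_iff_le_rpow (by norm_num) (by linarith)]
  push_cast
  exact (Nat.lt_floor_add_one _).le

/-- The part of `F` at modulation scale `m`. -/
noncomputable def piece (δ : ℝ) (F : ℝ × ℝ → ENNReal) (m : ℕ) : ℝ × ℝ → ENNReal :=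
  Set.indicator {a | level δ a = m} F

lemma measurable_piece {δ : ℝ} (hδ : 0 < δ) {F : ℝ × ℝ → ENNReal} (hF : Measurable F) (m : ℕ) :
    Measurable (piece δ F m) :=
  hF.indicator (measurable_level hδ (measurableSet_singleton m))

lemma tsum_piece (δ : ℝ) (F : ℝ × ℝ → ENNReal) (a : ℝ × ℝ) : ∑' m, piece δ F m a = F a := by
  rw [tsum_eq_single (level δ a)]
  · simp [piece]
  · intro m hm
    simp [piece, hm.symm]

/-- The weight `64 ^ m = (256 ^ m) ^ (3 / 4)` is at most the squared multiplier
`⟨τ - p̃(ξ)⟩ ^ (3 / 4)` on the piece `m`. -/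
lemma tsum_lintegral_piece_le {δ : ℝ} (hδ : 0 < δ) {F : ℝ × ℝ → ENNReal} (hF : Measurable F) :
    ∑' m, 64 ^ m * ∫⁻ a, piece δ F m a ^ 2 ≤
      ∫⁻ a, ENNReal.ofReal (jap (a.1 - ptilde δ a.2) ^ ((3 : ℝ) / 4)) * F a ^ 2 := by
  have hm := measurable_piece hδ hF
  calc ∑' m, 64 ^ m * ∫⁻ a, piece δ F m a ^ 2 = ∫⁻ a, ∑' m, 64 ^ m * piece δ F m a ^ 2 := by
        rw [lintegral_tsum fun m => Measurable.aemeasurable (by have := hm m; fun_prop)]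
        refine tsum_congr fun m => ?_
        rw [lintegral_const_mul _ (by have := hm m; fun_prop)]
    _ ≤ _ := by
        refine lintegral_mono fun a => ?_
        rw [tsum_eq_single (level δ a)]
        · have : piece δ F (level δ a) a = F a := by simp [piece]
          rw [this]
          gcongr
          have h : (64 : ENNReal) ^ level δ a = ENNReal.ofReal (64 ^ level δ a) := by
            rw [ENNReal.ofReal_pow (by norm_num)]; norm_num
          rw [h]
          refine ENNReal.ofReal_le_ofReal ?_
          calc (64 : ℝ) ^ level δ a = ((256 : ℝ) ^ level δ a) ^ ((3 : ℝ) / 4) := by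
                rw [← Real.rpow_natCast, ← Real.rpow_natCast, ← Real.rpow_mul (by norm_num),
                  mul_comm, Real.rpow_mul (by norm_num)]
                congr 1
                rw [show (256 : ℝ) = 4 ^ (4 : ℝ) by norm_num, ← Real.rpow_mul (by norm_num)]
                norm_num
            _ ≤ _ := Real.rpow_le_rpow (by positivity) (pow_level_le δ a) (by norm_num)
        · intro m hm
          simp [piece, hm.symm]

/-- The interaction of two pieces, with a gain in the separation of their scales. -/
lemma sqConv_piece_le {δ : ℝ} (hδ : δ ∈ Set.Ioc (0 : ℝ) 1) {F : ℝ × ℝ → ENNReal}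
    (hF : Measurable F) (hF0 : ∀ a : ℝ × ℝ, a.2 < 0 → F a = 0) {m n : ℕ} (hmn : m ≤ n) :
    sqConv (piece δ F m) (piece δ F n) ≤
      (256 * (1 / 2) ^ (n - m) * (64 ^ m * (∫⁻ a, piece δ F m a ^ 2) +
        64 ^ n * ∫⁻ a, piece δ F n a ^ 2)) ^ 2 := by
  have hsupp : ∀ k, ∀ a ∉ nearCurve δ (256 ^ (k + 1)), piece δ F k a = 0 := by
    intro k a ha
    by_cases hk : level δ a = k
    · have : a.2 < 0 := by
        by_contra h
        refine ha ⟨not_lt.1 h, ?_⟩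
        rw [← hk]
        exact (abs_le_jap _).trans (jap_le_pow_level δ a)
      simp [piece, hF0 a this]
    · simp [piece, hk]
  have h1 : ∀ k : ℕ, (1 : ℝ) ≤ 256 ^ (k + 1) := fun k => one_le_pow₀ (by norm_num)
  have main := sqConv_le_of_support (measurable_piece hδ.1 hF m) (measurable_piece hδ.1 hF n)
    (measurableSet_nearCurve hδ.1 _) (measurableSet_nearCurve hδ.1 _) (hsupp m) (hsupp n)
    (volume_nearCurve_inter_le hδ (h1 m) (h1 n))
  refine main.trans ?_
  set f := ∫⁻ a, piece δ F m a ^ 2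
  set g := ∫⁻ a, piece δ F n a ^ 2
  -- With `k = n - m ≥ 0` the measure is `≲ 256 ^ m * 16 ^ n = 64 ^ m * 64 ^ n * 4 ^ (-k)`.
  have hK : ENNReal.ofReal (8 * 256 ^ (m + 1) * √(256 ^ (m + 1) + 256 ^ (n + 1))) ≤
      (256 * (1 / 2) ^ (n - m)) ^ 2 * (64 ^ m * 64 ^ n) := by
    obtain ⟨k, rfl⟩ := Nat.exists_eq_add_of_le hmn
    rw [Nat.add_sub_cancel_left]
    have e : ((256 : ENNReal) * (1 / 2) ^ k) ^ 2 * (64 ^ m * 64 ^ (m + k)) =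
        ENNReal.ofReal ((256 * (1 / 2) ^ k) ^ 2 * (64 ^ m * 64 ^ (m + k))) := by
      have h2 : (1 / 2 : ENNReal) = ENNReal.ofReal (1 / 2) := by
        rw [ENNReal.ofReal_div_of_pos (by norm_num)]; norm_num
      have h64 : (64 : ENNReal) = ENNReal.ofReal 64 := by norm_num
      have h256 : (256 : ENNReal) = ENNReal.ofReal 256 := by norm_num
      rw [h2, h64, h256]
      simp only [← ENNReal.ofReal_pow (show (0 : ℝ) ≤ 1 / 2 by norm_num),
        ← ENNReal.ofReal_pow (show (0 : ℝ) ≤ 64 by norm_num)]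
      rw [← ENNReal.ofReal_mul (by positivity), ← ENNReal.ofReal_mul (by positivity),
        ← ENNReal.ofReal_pow (by positivity), ← ENNReal.ofReal_mul (by positivity)]
    rw [e]
    refine ENNReal.ofReal_le_ofReal ?_
    have hs : √((256 : ℝ) ^ (m + 1) + 256 ^ (m + k + 1)) ≤ 32 * 16 ^ (m + k) := by
      rw [Real.sqrt_le_left (by positivity)]
      have : (256 : ℝ) ^ (m + 1) ≤ 256 ^ (m + k + 1) :=
        pow_le_pow_right₀ (by norm_num) (by omega)
      have e16 : ((16 : ℝ) ^ (m + k)) ^ 2 = 256 ^ (m + k) := by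
        rw [← pow_mul, mul_comm, pow_mul]; norm_num
      rw [mul_pow, e16]
      rw [pow_succ 256 (m + k)] at this ⊢
      have : (0 : ℝ) ≤ 256 ^ (m + k) := by positivity
      linarith
    calc 8 * (256 : ℝ) ^ (m + 1) * √(256 ^ (m + 1) + 256 ^ (m + k + 1))
        ≤ 8 * (256 : ℝ) ^ (m + 1) * (32 * 16 ^ (m + k)) := by gcongr
      _ = (256 * (1 / 2) ^ k) ^ 2 * (64 ^ m * 64 ^ (m + k)) := by
          have e1 : ((1 / 2 : ℝ) ^ k) ^ 2 * 64 ^ k = 16 ^ k := by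
            rw [← pow_mul, mul_comm k 2, pow_mul, ← mul_pow]; norm_num
          have e2 : (64 : ℝ) ^ m * 64 ^ m = 256 ^ m * 16 ^ m := by
            rw [← mul_pow, ← mul_pow]; norm_num
          rw [pow_add 16, pow_add 64, pow_succ, mul_pow]
          linear_combination (-256 ^ 2 * 64 ^ m * 64 ^ m : ℝ) * e1 -
            (256 ^ 2 * 16 ^ k : ℝ) * e2
  calc _ ≤ (256 * (1 / 2) ^ (n - m)) ^ 2 * (64 ^ m * 64 ^ n) * (f * g) := by gcongr
    _ = (256 * (1 / 2) ^ (n - m)) ^ 2 * ((64 ^ m * f) * (64 ^ n * g)) := by ring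
    _ ≤ (256 * (1 / 2) ^ (n - m)) ^ 2 * ((64 ^ m * f + 64 ^ n * g) ^ 2) := by
        rw [pow_two (64 ^ m * f + 64 ^ n * g)]
        gcongr
        · exact le_self_add
        · exact le_add_self
    _ = _ := by rw [← mul_pow]

/-- Row sums of the kernel `2 ^ (-|m - n|)`: in truncated subtraction `(m - n) + (n - m)` is
`|m - n|`, and the extra term `2 ^ (-m)` makes the identity exact, hence provable by induction. -/
lemma tsum_geometric_abs_le (m : ℕ) :
    ∑' n : ℕ, (1 / 2 : ENNReal) ^ ((m - n) + (n - m)) + (1 / 2) ^ m = 3 := by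
  have hh : (1 / 2 : ENNReal) + 1 / 2 = 1 := ENNReal.add_halves 1
  induction m with
  | zero =>
    simp only [Nat.zero_sub, zero_add, Nat.sub_zero, pow_zero]
    have : ∑' n : ℕ, (1 / 2 : ENNReal) ^ n = 2 := by
      rw [ENNReal.tsum_geometric, one_div, ENNReal.one_sub_inv_two, inv_inv]
    rw [this]; norm_num
  | succ m ih =>
    rw [tsum_eq_zero_add' ENNReal.summable]
    simp only [Nat.add_sub_add_right, Nat.sub_zero, Nat.zero_sub, add_zero]
    rw [← ih, add_comm ((1 / 2 : ENNReal) ^ (m + 1)), add_assoc]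
    congr 1
    rw [pow_succ, ← mul_add, hh, mul_one]

/-- The bilinear estimate for functions supported at nonnegative frequencies. -/
lemma sqConv_self_le_of_nonneg {δ : ℝ} (hδ : δ ∈ Set.Ioc (0 : ℝ) 1) {F : ℝ × ℝ → ENNReal}
    (hF : Measurable F) (hF0 : ∀ a : ℝ × ℝ, a.2 < 0 → F a = 0) :
    sqConv F F ≤ (1536 * ∫⁻ a, ENNReal.ofReal (jap (a.1 - ptilde δ a.2) ^ ((3 : ℝ) / 4)) *
      F a ^ 2) ^ 2 := by
  have hm := measurable_piece hδ.1 hF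
  set g : ℕ → ENNReal := fun m => 64 ^ m * ∫⁻ a, piece δ F m a ^ 2 with hg
  set c : ℕ × ℕ → ENNReal := fun q =>
    256 * (1 / 2) ^ ((q.1 - q.2) + (q.2 - q.1)) * (g q.1 + g q.2) with hc
  have hcb : ∀ q : ℕ × ℕ, sqConv (piece δ F q.1) (piece δ F q.2) ≤ c q ^ 2 := by
    rintro ⟨m, n⟩
    rcases le_total m n with h | h
    · have := sqConv_piece_le hδ hF hF0 h
      simp only [hc, hg]
      rwa [Nat.sub_eq_zero_of_le h, zero_add]
    · have := sqConv_piece_le hδ hF hF0 h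
      simp only [hc, hg]
      rw [Nat.sub_eq_zero_of_le h, add_zero, sqConv_comm,
        add_comm (64 ^ m * ∫⁻ a, piece δ F m a ^ 2)]
      exact this
  have hexp : sqConv F F =
      ∫⁻ z, (∑' q : ℕ × ℕ, ∫⁻ a, piece δ F q.1 a * piece δ F q.2 (z - a)) ^ 2 := by
    refine lintegral_congr fun z => ?_
    congr 1
    rw [← lintegral_tsum fun q => Measurable.aemeasurable (by
      have := hm q.1; have := hm q.2; fun_prop)]
    refine lintegral_congr fun a => ?_
    rw [ENNReal.tsum_prod (f := fun m n => piece δ F m a * piece δ F n (z - a))]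
    simp_rw [ENNReal.tsum_mul_left, ENNReal.tsum_mul_right, tsum_piece]
  rw [hexp]
  refine (lintegral_sq_tsum_le (fun q => ?_) hcb).trans ?_
  · have := hm q.1
    have := hm q.2
    fun_prop
  have hgeo : ∀ m : ℕ, ∑' n : ℕ, (1 / 2 : ENNReal) ^ ((m - n) + (n - m)) ≤ 3 := fun m =>
    le_self_add.trans (tsum_geometric_abs_le m).le
  have hhalf : ∑' m, ∑' n, 256 * (1 / 2 : ENNReal) ^ ((m - n) + (n - m)) * g m
      ≤ 768 * ∑' m, g m := by
    rw [← ENNReal.tsum_mul_left]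
    refine ENNReal.tsum_le_tsum fun m => ?_
    rw [ENNReal.tsum_mul_right, ENNReal.tsum_mul_left]
    gcongr
    calc 256 * ∑' n : ℕ, (1 / 2 : ENNReal) ^ ((m - n) + (n - m)) ≤ 256 * 3 := by
          gcongr; exact hgeo m
      _ = 768 := by norm_num
  have hhalf' : ∑' m, ∑' n, 256 * (1 / 2 : ENNReal) ^ ((m - n) + (n - m)) * g n
      ≤ 768 * ∑' m, g m := by
    rw [ENNReal.tsum_comm]
    refine le_trans (le_of_eq ?_) hhalf
    refine tsum_congr fun m => tsum_congr fun n => ?_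
    rw [add_comm (n - m)]
  gcongr
  calc ∑' q, c q = ∑' m, ∑' n, 256 * (1 / 2 : ENNReal) ^ ((m - n) + (n - m)) * (g m + g n) :=
        ENNReal.tsum_prod (f := fun m n =>
          256 * (1 / 2 : ENNReal) ^ ((m - n) + (n - m)) * (g m + g n))
    _ = ∑' m, ∑' n, 256 * (1 / 2 : ENNReal) ^ ((m - n) + (n - m)) * g m +
        ∑' m, ∑' n, 256 * (1 / 2 : ENNReal) ^ ((m - n) + (n - m)) * g n := by
        simp_rw [mul_add, ENNReal.tsum_add]
    _ ≤ 768 * ∑' m, g m + 768 * ∑' m, g m := add_le_add hhalf hhalf'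
    _ = 1536 * ∑' m, g m := by rw [← add_mul]; norm_num
    _ ≤ _ := by gcongr; exact tsum_lintegral_piece_le hδ.1 hF

/-- The bilinear estimate without restriction on the frequencies. -/
lemma sqConv_self_le {δ : ℝ} (hδ : δ ∈ Set.Ioc (0 : ℝ) 1) {F : ℝ × ℝ → ENNReal}
    (hF : Measurable F) :
    sqConv F F ≤ 16 * (6144 * ∫⁻ a, ENNReal.ofReal (jap (a.1 - ptilde δ a.2) ^ ((3 : ℝ) / 4)) *
      F a ^ 2) ^ 2 := by
  have hp := measurable_ptilde hδ.1
  have hj := measurable_jap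
  set W : ℝ × ℝ → ENNReal :=
    fun a => ENNReal.ofReal (jap (a.1 - ptilde δ a.2) ^ ((3 : ℝ) / 4)) with hW
  have hWm : Measurable W := by fun_prop
  have hWneg : ∀ a, W (-a) = W a := by
    intro a
    simp only [hW, Prod.fst_neg, Prod.snd_neg, ptilde_neg]
    have : -a.1 - -ptilde δ a.2 = -(a.1 - ptilde δ a.2) := by ring
    rw [this]
    simp only [jap, neg_sq]
  refine (sqConv_le_fold hF).trans ?_
  gcongr
  refine (sqConv_self_le_of_nonneg hδ (measurable_foldFreq hF) ?_).trans ?_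
  · intro a ha
    simp [foldFreq, not_le.2 ha]
  refine pow_le_pow_left₀ (zero_le) ?_ 2
  have hsq : ∀ x y : ENNReal, (x + y) ^ 2 ≤ 2 * (x ^ 2 + y ^ 2) := by
    intro x y
    have := ENNReal.rpow_add_le_mul_rpow_add_rpow x y (one_le_two : (1 : ℝ) ≤ 2)
    norm_num at this
    exact this
  calc 1536 * ∫⁻ a, W a * foldFreq F a ^ 2
      ≤ 1536 * ∫⁻ a, 2 * (W a * F a ^ 2 + W (-a) * F (-a) ^ 2) := by
        refine mul_le_mul' le_rfl (lintegral_mono fun a => ?_)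
        by_cases h : 0 ≤ a.2
        · have e : foldFreq F a = F a + F (-a) := by simp [foldFreq, h]
          rw [e, hWneg, ← mul_add, mul_left_comm]
          gcongr
          exact hsq _ _
        · have e : foldFreq F a = 0 := by simp [foldFreq, h]
          rw [e]; simp
    _ = 1536 * (2 * ((∫⁻ a, W a * F a ^ 2) + ∫⁻ a, W a * F a ^ 2)) := by
        rw [lintegral_const_mul _ (by fun_prop), lintegral_add_left (by fun_prop),
          lintegral_neg_eq_self (fun a => W a * F a ^ 2)]
    _ = 6144 * ∫⁻ a, W a * F a ^ 2 := by
        rw [← two_mul, ← mul_assoc, ← mul_assoc]; norm_num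

/-! ### Plancherel: the fourth power norm as a convolution -/

open FourierTransform in
/-- Plancherel's theorem for `u ^ 2 = 𝓕 (𝓕⁻ u ⋆ 𝓕⁻ u)`, with the convolution bounded by the
convolution of the absolute values. -/
lemma lintegral_enorm_pow_four_le {V : Type*} [NormedAddCommGroup V] [InnerProductSpace ℝ V]
    [FiniteDimensional ℝ V] [MeasurableSpace V] [BorelSpace V] (u : SchwartzMap V ℂ) :
    ∫⁻ x, ‖u x‖ₑ ^ 4 ≤ ∫⁻ z, (∫⁻ a, ‖(𝓕⁻ u) a‖ₑ * ‖(𝓕⁻ u) (z - a)‖ₑ) ^ 2 := by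
  set f : SchwartzMap V ℂ := 𝓕⁻ u with hf
  set h : SchwartzMap V ℂ := SchwartzMap.convolution (ContinuousLinearMap.mul ℂ ℂ) f f with hh
  have hFh : ∀ x, (𝓕 h) x = u x * u x := by
    intro x
    rw [hh, SchwartzMap.fourier_convolution, hf]
    simp
  have key : ∀ g : SchwartzMap V ℂ,
      ENNReal.ofReal (∫ x, ‖g x‖ ^ 2) = ∫⁻ x, ‖g x‖ₑ ^ 2 := by
    intro g
    rw [ofReal_integral_eq_lintegral_ofReal]
    · congr 1 with x
      rw [ENNReal.ofReal_pow (norm_nonneg _), ofReal_norm]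
    · exact (g.memLp 2 volume).integrable_norm_pow (by norm_num)
    · exact Filter.Eventually.of_forall fun x => by positivity
  calc ∫⁻ x, ‖u x‖ₑ ^ 4 = ∫⁻ x, ‖(𝓕 h) x‖ₑ ^ 2 := by
        congr 1 with x
        rw [hFh, enorm_mul]; ring
    _ = ∫⁻ x, ‖h x‖ₑ ^ 2 := by
        rw [← key, ← key, SchwartzMap.integral_norm_sq_fourier]
    _ ≤ _ := by
        gcongr with z
        rw [hh, SchwartzMap.convolution_apply]
        refine (enorm_integral_le_lintegral_enorm _).trans_eq ?_
        simp [enorm_mul]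

open FourierTransform in
/-- Up to the constant `(2π)⁻²`, the space-time Fourier transform is the inverse Fourier transform
of the dilate `x ↦ v (-2πx)` on the Euclidean plane. -/
lemma exists_fourierInv_eq (v : SchwartzMap (ℝ × ℝ) ℂ) :
    ∃ u : SchwartzMap (WithLp 2 (ℝ × ℝ)) ℂ,
      (∀ x : WithLp 2 (ℝ × ℝ), u x = v ((-(2 * π)) • x.ofLp)) ∧
      ∀ z : ℝ × ℝ, (𝓕⁻ u) (WithLp.toLp 2 z) =
        (((2 * π) ^ 2)⁻¹ : ℝ) • spaceTimeFourier (fun q => v q) z.1 z.2 := by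
  have hpi := Real.pi_pos
  have hne : (-(2 * π)) ≠ 0 := by simp [hpi.ne']
  set L : WithLp 2 (ℝ × ℝ) ≃L[ℝ] ℝ × ℝ :=
    (WithLp.prodContinuousLinearEquiv 2 ℝ ℝ ℝ).trans
      (ContinuousLinearEquiv.smulLeft (Units.mk0 (-(2 * π)) hne)) with hL
  have hLa : ∀ x, L x = (-(2 * π)) • x.ofLp := fun x => rfl
  set u := SchwartzMap.compCLMOfContinuousLinearEquiv ℂ L v with hu
  have hua : ∀ x, u x = v ((-(2 * π)) • x.ofLp) := fun x => by
    rw [hu, SchwartzMap.compCLMOfContinuousLinearEquiv_apply]; rfl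
  refine ⟨u, hua, fun z => ?_⟩
  set G : ℝ × ℝ → ℂ :=
    fun q => Complex.exp (-Complex.I * (q.1 * z.1 + q.2 * z.2)) * v q with hG
  have hint : Integrable G := by
    refine (v.integrable (μ := volume)).norm.mono' ?_ ?_
    · have := v.continuous
      exact Continuous.aestronglyMeasurable (by fun_prop)
    · refine Filter.Eventually.of_forall fun q => ?_
      have : -Complex.I * (q.1 * z.1 + q.2 * z.2) =
          ((-(q.1 * z.1 + q.2 * z.2) : ℝ) : ℂ) * Complex.I := by push_cast; ring
      rw [hG, norm_mul, this, Complex.norm_exp_ofReal_mul_I, one_mul]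
  have e1 : spaceTimeFourier (fun q => v q) z.1 z.2 = ∫ q, G q := by
    rw [Measure.volume_eq_prod, integral_prod _ hint]; rfl
  have e2 : (𝓕⁻ u) (WithLp.toLp 2 z) = ∫ x : WithLp 2 (ℝ × ℝ), G ((-(2 * π)) • x.ofLp) := by
    rw [SchwartzMap.fourierInv_coe, Real.fourierInv_eq']
    congr 1 with x
    rw [hua, smul_eq_mul, hG]
    simp only [WithLp.prod_inner_apply]
    congr 2
    simp
    ring
  have e3 : ∫ x : WithLp 2 (ℝ × ℝ), G ((-(2 * π)) • x.ofLp) =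
      ∫ y : ℝ × ℝ, G ((-(2 * π)) • y) := by
    exact (WithLp.volume_preserving_ofLp ℝ ℝ).integral_comp
      (WithLp.prodContinuousLinearEquiv 2 ℝ ℝ ℝ).toHomeomorph.measurableEmbedding
      (fun y => G ((-(2 * π)) • y))
  rw [e1, e2, e3, Measure.integral_comp_smul]
  congr 1
  simp [abs_of_pos hpi]

/-- The Fourier side of the `L⁴` norm: `‖v‖₄⁴` is at most the squared `L²` norm of
`|v̂| ⋆ |v̂|`. The constant `(2π)⁻⁶` that Plancherel gives is bounded by `1`. -/
lemma lintegral_pow_four_le_sqConv (v : SchwartzMap (ℝ × ℝ) ℂ) :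
    Measurable (fun p : ℝ × ℝ => ‖spaceTimeFourier (fun q => v q) p.1 p.2‖ₑ) ∧
    ∫⁻ p, ‖v p‖ₑ ^ 4 ≤ sqConv (fun p => ‖spaceTimeFourier (fun q => v q) p.1 p.2‖ₑ)
      (fun p => ‖spaceTimeFourier (fun q => v q) p.1 p.2‖ₑ) := by
  obtain ⟨u, hu, hf⟩ := exists_fourierInv_eq v
  set F : ℝ × ℝ → ENNReal := fun p => ‖spaceTimeFourier (fun q => v q) p.1 p.2‖ₑ with hF
  have hpi := Real.pi_pos
  set c : ℝ := (2 * π) ^ 2 with hc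
  have hc0 : 0 < c := by positivity
  have hc1 : 1 ≤ c := by nlinarith [Real.pi_gt_three]
  set f := FourierTransformInv.fourierInv u with hfdef
  have hFf : ∀ z, F z = ENNReal.ofReal c * ‖f (WithLp.toLp 2 z)‖ₑ := by
    intro z
    rw [hf z, enorm_smul, ← mul_assoc, Real.enorm_eq_ofReal (by positivity),
      ← ENNReal.ofReal_mul hc0.le, mul_inv_cancel₀ hc0.ne']
    simp [hF]
  have hto := WithLp.volume_preserving_toLp ℝ ℝ
  have hemb : MeasurableEmbedding (WithLp.toLp 2 : ℝ × ℝ → WithLp 2 (ℝ × ℝ)) :=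
    (WithLp.prodContinuousLinearEquiv 2 ℝ ℝ ℝ).symm.toHomeomorph.measurableEmbedding
  have hfc := f.continuous
  have hFm : Measurable F := by
    have : F = fun z => ENNReal.ofReal c * ‖f (WithLp.toLp 2 z)‖ₑ := funext hFf
    rw [this]
    exact (hfc.measurable.comp hto.measurable).enorm.const_mul _
  refine ⟨hFm, ?_⟩
  have hmain := lintegral_enorm_pow_four_le u
  rw [← hfdef] at hmain
  -- transfer both sides to `ℝ × ℝ`
  have hl : ∫⁻ x, ‖u x‖ₑ ^ 4 = ENNReal.ofReal c⁻¹ * ∫⁻ p, ‖v p‖ₑ ^ 4 := by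
    rw [← hto.lintegral_comp_emb hemb]
    simp only [hu]
    have hv := v.continuous.measurable
    have : ∫⁻ q : ℝ × ℝ, ‖v ((-(2 * π)) • q)‖ₑ ^ 4 =
        ∫⁻ p, ‖v p‖ₑ ^ 4 ∂(Measure.map (fun q : ℝ × ℝ => (-(2 * π)) • q) volume) := by
      rw [lintegral_map (by fun_prop) (by fun_prop)]
    rw [this, Measure.map_addHaar_smul _ (by simp [hpi.ne']), lintegral_smul_measure]
    simp [hc, abs_of_pos hpi]
  have hr : ∫⁻ z, (∫⁻ a, ‖f a‖ₑ * ‖f (z - a)‖ₑ) ^ 2 ≤ ENNReal.ofReal c⁻¹ * sqConv F F := by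
    rw [← hto.lintegral_comp_emb hemb, sqConv, ← lintegral_const_mul' _ _ ENNReal.ofReal_ne_top]
    refine lintegral_mono fun z => ?_
    rw [← hto.lintegral_comp_emb hemb]
    have : ∫⁻ a, F a * F (z - a) = ENNReal.ofReal (c * c) *
        ∫⁻ a : ℝ × ℝ, ‖f (WithLp.toLp 2 a)‖ₑ * ‖f (WithLp.toLp 2 z - WithLp.toLp 2 a)‖ₑ := by
      rw [← lintegral_const_mul' _ _ ENNReal.ofReal_ne_top]
      congr 1 with a
      rw [hFf, hFf, WithLp.toLp_sub, ENNReal.ofReal_mul hc0.le]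
      ring
    rw [this, mul_pow, ← mul_assoc]
    refine le_mul_of_one_le_left' ?_
    rw [← ENNReal.ofReal_pow (by positivity), ← ENNReal.ofReal_mul (by positivity)]
    rw [ENNReal.one_le_ofReal]
    have : c⁻¹ * (c * c) ^ 2 = c ^ 3 := by field_simp
    rw [this]
    exact one_le_pow₀ hc1
  rw [hl] at hmain
  have := hmain.trans hr
  rwa [ENNReal.mul_le_mul_iff_right (by simp [hc0]) ENNReal.ofReal_ne_top] at this

/-- The `L⁴` Strichartz estimate `‖v‖_{L⁴} ≤ C ‖⟨τ − p̃_δ(ξ)⟩^{3/8} v̂‖_{L²}`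
for the scaled ILW, with constant uniform in `δ ∈ (0,1]`. -/
theorem L4_Strichartz_scaled_ILW :
    ∃ C > 0, ∀ δ ∈ Set.Ioc (0 : ℝ) 1, ∀ v : SchwartzMap (ℝ × ℝ) ℂ,
      eLpNorm (fun p : ℝ × ℝ => v p) 4 volume
        ≤ ENNReal.ofReal C *
          eLpNorm (fun p : ℝ × ℝ =>
            jap (p.1 - ptilde δ p.2) ^ ((3 : ℝ) / 8) *
              ‖spaceTimeFourier (fun q => v q) p.1 p.2‖) 2 volume := by
  -- `16 * 6144 ^ 2 ≤ 160 ^ 4`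
  refine ⟨160, by norm_num, fun δ hδ v => ?_⟩
  obtain ⟨hFm, hF⟩ := lintegral_pow_four_le_sqConv v
  have hI := hF.trans (sqConv_self_le hδ hFm)
  set I : ENNReal := ∫⁻ a : ℝ × ℝ, ENNReal.ofReal (jap (a.1 - ptilde δ a.2) ^ ((3 : ℝ) / 4)) *
    ‖spaceTimeFourier (fun q => v q) a.1 a.2‖ₑ ^ 2 with hIdef
  have h4 : eLpNorm (fun p : ℝ × ℝ => v p) 4 volume =
      (∫⁻ p, ‖v p‖ₑ ^ 4) ^ ((1 : ℝ) / 4) := by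
    have := eLpNorm_nnreal_eq_lintegral (μ := volume) (f := fun p : ℝ × ℝ => v p) (p := 4)
      (by norm_num)
    simpa using this
  have h2 : eLpNorm (fun p : ℝ × ℝ => jap (p.1 - ptilde δ p.2) ^ ((3 : ℝ) / 8) *
      ‖spaceTimeFourier (fun q => v q) p.1 p.2‖) 2 volume = I ^ ((1 : ℝ) / 2) := by
    have := eLpNorm_nnreal_eq_lintegral (μ := volume) (f := fun p : ℝ × ℝ =>
      jap (p.1 - ptilde δ p.2) ^ ((3 : ℝ) / 8) * ‖spaceTimeFourier (fun q => v q) p.1 p.2‖)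
      (p := 2) (by norm_num)
    have e : ∀ p : ℝ × ℝ, ‖jap (p.1 - ptilde δ p.2) ^ ((3 : ℝ) / 8) *
        ‖spaceTimeFourier (fun q => v q) p.1 p.2‖‖ₑ ^ 2 =
        ENNReal.ofReal (jap (p.1 - ptilde δ p.2) ^ ((3 : ℝ) / 4)) *
          ‖spaceTimeFourier (fun q => v q) p.1 p.2‖ₑ ^ 2 := by
      intro p
      have hj : 0 ≤ jap (p.1 - ptilde δ p.2) := Real.sqrt_nonneg _
      rw [enorm_mul, mul_pow, enorm_norm, Real.enorm_eq_ofReal (by positivity),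
        ← ENNReal.ofReal_pow (by positivity), ← Real.rpow_mul_natCast hj]
      norm_num
    have h := this
    simp only [NNReal.coe_ofNat, ENNReal.coe_ofNat, ENNReal.rpow_ofNat, e] at h
    exact h
  rw [h4, h2]
  have hle : ∫⁻ p, ‖v p‖ₑ ^ 4 ≤ (160 * I ^ ((1 : ℝ) / 2)) ^ (4 : ℝ) := by
    refine hI.trans ?_
    rw [ENNReal.mul_rpow_of_nonneg _ _ (by norm_num), ← ENNReal.rpow_mul, mul_pow, ← mul_assoc]
    norm_num
    gcongr
    norm_num
  calc (∫⁻ p, ‖v p‖ₑ ^ 4) ^ ((1 : ℝ) / 4)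
      ≤ ((160 * I ^ ((1 : ℝ) / 2)) ^ (4 : ℝ)) ^ ((1 : ℝ) / 4) := by gcongr
    _ = ENNReal.ofReal 160 * I ^ ((1 : ℝ) / 2) := by
        rw [← ENNReal.rpow_mul]; norm_num
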